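/- arXiv:1808.01922 — 2 statements merged into one kernel-verified Lean document; each statement's English description precedes it below -/
import Mathlib

section
/- Let A be a Hopf algebra over a field k with bijective antipode and let N ⊆ A be a left coideal subalgebra which is a semisimple ring. Then there exists a right group-like projection P ∈ A such that N = N_P, and moreover N_P = V_P. -/
open scoped TensorProduct

noncomputable section

variable (k : Type*) [Field k] {A : Type*} [Ring A] [HopfAlgebra k A]

/-- `P` is a right group-like projection: a nonzero idempotent with
`Δ(P)(1 ⊗ P) = P ⊗ P = (1 ⊗ P)Δ(P)`. -/
def IsRightGroupLikeProjection (P : A) : Prop :=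
  P ≠ 0 ∧ P * P = P ∧
    Coalgebra.comul (R := k) P * ((1 : A) ⊗ₜ[k] P) = P ⊗ₜ[k] P ∧
    ((1 : A) ⊗ₜ[k] P) * Coalgebra.comul (R := k) P = P ⊗ₜ[k] P

/-- `P` is a left group-like projection: a nonzero idempotent with
`Δ(P)(P ⊗ 1) = P ⊗ P = (P ⊗ 1)Δ(P)`. -/
def IsLeftGroupLikeProjection (P : A) : Prop :=
  P ≠ 0 ∧ P * P = P ∧
    Coalgebra.comul (R := k) P * (P ⊗ₜ[k] (1 : A)) = P ⊗ₜ[k] P ∧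
    (P ⊗ₜ[k] (1 : A)) * Coalgebra.comul (R := k) P = P ⊗ₜ[k] P

/-- A two-sided group-like projection. -/
def IsTwoSidedGroupLikeProjection (P : A) : Prop :=
  IsRightGroupLikeProjection k P ∧ IsLeftGroupLikeProjection k P

/-- `N_P^l = {x : (1 ⊗ P)Δ(x) = x ⊗ P}`. -/
def NPlSet (P : A) : Set A :=
  {x : A | ((1 : A) ⊗ₜ[k] P) * Coalgebra.comul (R := k) x = x ⊗ₜ[k] P}

/-- `N_P^r = {x : Δ(x)(1 ⊗ P) = x ⊗ P}`. -/
def NPrSet (P : A) : Set A :=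
  {x : A | Coalgebra.comul (R := k) x * ((1 : A) ⊗ₜ[k] P) = x ⊗ₜ[k] P}

/-- `N_P = N_P^l ∩ N_P^r`. -/
def NPSet (P : A) : Set A := NPlSet k P ∩ NPrSet k P

/-- `V_P = {(μ ⊗ id)(Δ(P)) : μ ∈ A*}`, the smallest left coideal containing `P`. -/
def VPSet (P : A) : Set A :=
  {x : A | ∃ μ : A →ₗ[k] k,
    x = TensorProduct.lid k A ((TensorProduct.map μ LinearMap.id) (Coalgebra.comul (R := k) P))}

/-- A submodule `N ⊆ A` is a left coideal if `Δ(N) ⊆ A ⊗ N`. -/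
def IsLeftCoideal (N : Submodule k A) : Prop :=
  ∀ x ∈ N, Coalgebra.comul (R := k) x ∈
    LinearMap.range (TensorProduct.map (LinearMap.id : A →ₗ[k] A) N.subtype)

/-- A subalgebra `N ⊆ A` is a left coideal subalgebra if `Δ(N) ⊆ A ⊗ N`. -/
def IsLeftCoidealSubalgebra (N : Subalgebra k A) : Prop :=
  IsLeftCoideal k (Subalgebra.toSubmodule N)

/-!
Since `N` is semisimple, the character `ε|_N` is afforded by a central idempotent `P` of `N`, i.e.
`x P = ε(x) P = P x` for `x ∈ N` and `ε(P) = 1`. As `Δ(N) ⊆ A ⊗ N`, this gives `N ⊆ N_P`, and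
`V_P ⊆ N` because `N` is a left coideal containing `P`. The point is to show that `N_P ⊆ V_P`.

The identity `(1 ⊗ x)Δ(p) = (S(x₁) ⊗ 1)Δ(x₂p)` enters twice. For `x ∈ N_P` it turns into
`(1 ⊗ x)Δ(P) = (S(x) ⊗ 1)Δ(P)`, so that `N_P V_P ⊆ V_P` and it suffices to find `1` in `V_P`. Being
a left ideal of the semisimple ring `N`, `V_P` contains some `f` with `v f = v` for all `v ∈ V_P`,
i.e. `Δ(P)(1 ⊗ f) = Δ(P)`. The identity for `x = P` and `p = f` then reads `(1 ⊗ P)Δ(f) = 1 ⊗ P`,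
and applying `id ⊗ ε` yields `f = 1`.
-/

section Slice

variable {R M M' N N' : Type*} [CommSemiring R] [AddCommMonoid M] [Module R M]
  [AddCommMonoid M'] [Module R M'] [AddCommMonoid N] [Module R N] [AddCommMonoid N'] [Module R N']

/-- The slice map `μ ⊗ id : M ⊗ N → R ⊗ N ≃ N`, bilinear in the functional `μ` and the tensor. -/
def leftSlice : Module.Dual R M →ₗ[R] M ⊗[R] N →ₗ[R] N :=
  (TensorProduct.lid R N).toLinearMap.compRight R ∘ₗ LinearMap.rTensorHom N

@[simp]
theorem leftSlice_tmul (μ : Module.Dual R M) (m : M) (n : N) :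
    leftSlice μ (m ⊗ₜ[R] n) = μ m • n := rfl

theorem leftSlice_lTensor (μ : Module.Dual R M) (f : N →ₗ[R] N') (t : M ⊗[R] N) :
    leftSlice μ (f.lTensor M t) = f (leftSlice μ t) := by
  suffices leftSlice μ ∘ₗ f.lTensor M = f ∘ₗ leftSlice μ from LinearMap.congr_fun this t
  ext m n
  simp

theorem leftSlice_rTensor (μ : Module.Dual R M') (f : M →ₗ[R] M') (t : M ⊗[R] N) :
    leftSlice μ (f.rTensor N t) = leftSlice (μ ∘ₗ f) t := by
  suffices leftSlice μ ∘ₗ f.rTensor N = leftSlice (μ ∘ₗ f) from LinearMap.congr_fun this t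
  ext m n
  simp

theorem ext_leftSlice [Module.Projective R M] {s t : M ⊗[R] N}
    (h : ∀ μ : Module.Dual R M, leftSlice μ s = leftSlice μ t) : s = t := by
  classical
  obtain ⟨σ, hσ⟩ := Module.projective_def'.mp ‹Module.Projective R M›
  have hσ_inj : Function.Injective (σ.rTensor N) :=
    Function.LeftInverse.injective (g := (Finsupp.linearCombination R id).rTensor N) fun u => by
      rw [← LinearMap.rTensor_comp_apply, hσ, LinearMap.rTensor_id_apply]
  refine hσ_inj ((TensorProduct.finsuppScalarLeft R N M).injective (Finsupp.ext fun i => ?_))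
  rw [TensorProduct.finsuppScalarLeft_apply, TensorProduct.finsuppScalarLeft_apply]
  exact ((leftSlice_rTensor _ σ s).trans (h _)).trans (leftSlice_rTensor _ σ t).symm

end Slice

section TensorMul

variable {R A B : Type*} [CommSemiring R] [Semiring A] [Algebra R A] [Semiring B] [Algebra R B]

theorem one_tmul_mul (b : B) (t : A ⊗[R] B) :
    ((1 : A) ⊗ₜ[R] b) * t = (LinearMap.mulLeft R b).lTensor A t := by
  rw [← LinearMap.mulLeft_apply R, LinearMap.mulLeft_tmul, LinearMap.mulLeft_one]
  rfl

theorem mul_one_tmul (t : A ⊗[R] B) (b : B) :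
    t * ((1 : A) ⊗ₜ[R] b) = (LinearMap.mulRight R b).lTensor A t := by
  rw [← LinearMap.mulRight_apply R, LinearMap.mulRight_tmul, LinearMap.mulRight_one]
  rfl

theorem tmul_one_mul (a : A) (t : A ⊗[R] B) :
    (a ⊗ₜ[R] (1 : B)) * t = (LinearMap.mulLeft R a).rTensor B t := by
  rw [← LinearMap.mulLeft_apply R, LinearMap.mulLeft_tmul, LinearMap.mulLeft_one]
  rfl

theorem leftSlice_one_tmul_mul (μ : Module.Dual R A) (b : B) (t : A ⊗[R] B) :
    leftSlice μ (((1 : A) ⊗ₜ[R] b) * t) = b * leftSlice μ t := by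
  rw [one_tmul_mul, leftSlice_lTensor, LinearMap.mulLeft_apply]

theorem leftSlice_mul_one_tmul (μ : Module.Dual R A) (t : A ⊗[R] B) (b : B) :
    leftSlice μ (t * ((1 : A) ⊗ₜ[R] b)) = leftSlice μ t * b := by
  rw [mul_one_tmul, leftSlice_lTensor, LinearMap.mulRight_apply]

theorem leftSlice_tmul_one_mul (μ : Module.Dual R A) (a : A) (t : A ⊗[R] B) :
    leftSlice μ ((a ⊗ₜ[R] (1 : B)) * t) = leftSlice (μ ∘ₗ LinearMap.mulLeft R a) t := by
  rw [tmul_one_mul, leftSlice_rTensor]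

end TensorMul

section Semisimple

variable {R : Type*} [Ring R] [IsSemisimpleRing R]

theorem exists_mem_ideal_forall_mul_eq (I : Ideal R) : ∃ e ∈ I, ∀ x ∈ I, x * e = x := by
  obtain ⟨e, he, rfl⟩ := IsSemisimpleRing.ideal_eq_span_idempotent I
  refine ⟨e, Ideal.mem_span_singleton_self e, fun x hx => ?_⟩
  obtain ⟨a, rfl⟩ := Ideal.mem_span_singleton'.mp hx
  rw [mul_assoc, he.eq]

theorem exists_mul_mul_self_eq (x : R) : ∃ y, x * y * x = x := by
  obtain ⟨e, he, hmul⟩ := exists_mem_ideal_forall_mul_eq (Ideal.span {x})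
  obtain ⟨y, rfl⟩ := Ideal.mem_span_singleton'.mp he
  exact ⟨y, by rw [mul_assoc, hmul x (Ideal.mem_span_singleton_self x)]⟩

theorem exists_mem_ideal_forall_mul_eq_and_mul_eq (I : Ideal R) [I.IsTwoSided] :
    ∃ e ∈ I, ∀ x ∈ I, x * e = x ∧ e * x = x := by
  obtain ⟨e, he, hmul⟩ := exists_mem_ideal_forall_mul_eq I
  refine ⟨e, he, fun x hx => ⟨hmul x hx, ?_⟩⟩
  obtain ⟨y, hy⟩ := exists_mul_mul_self_eq (x - e * x)
  have hmem : (x - e * x) * y ∈ I := I.mul_mem_right y (I.sub_mem hx (I.mul_mem_left e hx))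
  have hkill : e * (x - e * x) = 0 := by rw [mul_sub, ← mul_assoc, hmul e he, sub_self]
  have hzero : x - e * x = 0 := by
    rw [← hy, ← hmul _ hmem, mul_assoc, hkill, mul_zero]
  exact (sub_eq_zero.mp hzero).symm

theorem exists_forall_mul_eq_smul_and_mul_eq_smul {S : Type*} [CommRing S] [Algebra S R]
    (χ : R →ₐ[S] S) : ∃ p, χ p = 1 ∧ ∀ x, x * p = χ x • p ∧ p * x = χ x • p := by
  obtain ⟨e, he, hmul⟩ := exists_mem_ideal_forall_mul_eq_and_mul_eq (RingHom.ker χ)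
  refine ⟨1 - e, by rw [map_sub, map_one, (RingHom.mem_ker).mp he, sub_zero], fun x => ?_⟩
  obtain ⟨hright, hleft⟩ := hmul (x - algebraMap S R (χ x)) (by simp [RingHom.mem_ker])
  constructor
  · rw [Algebra.smul_def, ← sub_eq_zero, ← sub_mul, mul_sub, mul_one, hright, sub_self]
  · rw [Algebra.smul_def, Algebra.commutes, ← sub_eq_zero, ← mul_sub, sub_mul, one_mul, hleft,
      sub_self]

end Semisimple

section AntipodeMulComul

variable (R : Type*) {H : Type*} [CommSemiring R] [Semiring H] [HopfAlgebra R H]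

/-- The linear map `a ⊗ b ↦ (S(a) ⊗ 1)Δ(b)` on `H ⊗ H`, used to turn `Δ(x)(1 ⊗ p)` into
`(1 ⊗ x)Δ(p)`. -/
def antipodeMulComul : H ⊗[R] H →ₗ[R] H ⊗[R] H :=
  (LinearMap.mul' R H ∘ₗ (HopfAlgebra.antipode R).rTensor H).rTensor H ∘ₗ
    (TensorProduct.assoc R H H H).symm.toLinearMap ∘ₗ Coalgebra.comul.lTensor H

theorem antipodeMulComul_tmul (a b : H) :
    antipodeMulComul R (a ⊗ₜ[R] b) =
      (HopfAlgebra.antipode R a ⊗ₜ[R] (1 : H)) * Coalgebra.comul (R := R) b := by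
  simp only [antipodeMulComul, LinearMap.comp_apply, LinearMap.lTensor_tmul, LinearEquiv.coe_coe]
  induction Coalgebra.comul (R := R) b with
  | zero => simp
  | add x y hx hy => simp [mul_add, TensorProduct.tmul_add, hx, hy]
  | tmul x y => simp

theorem antipodeMulComul_mul_one_tmul (t : H ⊗[R] H) (p : H) :
    antipodeMulComul R (t * ((1 : H) ⊗ₜ[R] p)) =
      antipodeMulComul R t * Coalgebra.comul (R := R) p := by
  induction t with
  | zero => simp
  | add x y hx hy => simp [add_mul, hx, hy]
  | tmul x y => simp [antipodeMulComul_tmul, mul_assoc]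

theorem antipodeMulComul_comul (x : H) :
    antipodeMulComul R (Coalgebra.comul (R := R) x) = (1 : H) ⊗ₜ[R] x := by
  simp only [antipodeMulComul, LinearMap.comp_apply, LinearEquiv.coe_coe,
    Coalgebra.coassoc_symm_apply]
  rw [← LinearMap.rTensor_comp_apply, LinearMap.comp_assoc,
    HopfAlgebra.mul_antipode_rTensor_comul, LinearMap.rTensor_comp_apply,
    Coalgebra.rTensor_counit_comul, LinearMap.rTensor_tmul, Algebra.linearMap_apply, map_one]

theorem antipodeMulComul_comul_mul_one_tmul (x p : H) :
    antipodeMulComul R (Coalgebra.comul (R := R) x * ((1 : H) ⊗ₜ[R] p)) =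
      ((1 : H) ⊗ₜ[R] x) * Coalgebra.comul (R := R) p := by
  rw [antipodeMulComul_mul_one_tmul, antipodeMulComul_comul]

theorem comul_mul_one_tmul_injective {p : H} (hp : Coalgebra.counit (R := R) p = 1) :
    Function.Injective fun x : H => Coalgebra.comul (R := R) p * ((1 : H) ⊗ₜ[R] x) := by
  have hcounit : Coalgebra.counit (R := R) ∘ₗ LinearMap.mulLeft R p = Coalgebra.counit := by
    ext x
    simp [hp]
  have hrecover (x : H) : Coalgebra.counit.lTensor H
      (antipodeMulComul R (Coalgebra.comul (R := R) p * ((1 : H) ⊗ₜ[R] x))) = x ⊗ₜ[R] 1 := by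
    rw [antipodeMulComul_comul_mul_one_tmul, one_tmul_mul, ← LinearMap.lTensor_comp_apply,
      hcounit, Coalgebra.lTensor_counit_comul]
  intro x y hxy
  have htmul : x ⊗ₜ[R] (1 : R) = y ⊗ₜ[R] 1 := by
    simp only at hxy
    rw [← hrecover x, hxy, hrecover y]
  simpa using congrArg (TensorProduct.rid R H) htmul

end AntipodeMulComul

section LeftCoidealSpan

variable (R : Type*) {C : Type*} [CommSemiring R] [AddCommMonoid C] [Module R C] [Coalgebra R C]

/-- The submodule `{(μ ⊗ id)(Δ(x)) : μ ∈ C*}` of a coalgebra `C`: over a field, the smallest left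
coideal containing `x`, so that it is `V_P` when `x = P`. -/
def leftCoidealSpan (x : C) : Submodule R C :=
  LinearMap.range (leftSlice.flip (Coalgebra.comul (R := R) x))

variable {R}

theorem mem_leftCoidealSpan {x v : C} :
    v ∈ leftCoidealSpan R x ↔
      ∃ μ : Module.Dual R C, leftSlice μ (Coalgebra.comul (R := R) x) = v :=
  Iff.rfl

theorem leftSlice_comul_mem_leftCoidealSpan (μ : Module.Dual R C) (x : C) :
    leftSlice μ (Coalgebra.comul (R := R) x) ∈ leftCoidealSpan R x :=
  ⟨μ, rfl⟩

end LeftCoidealSpan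

section HopfLeftCoidealSpan

variable {R H : Type*} [CommSemiring R] [Semiring H] [HopfAlgebra R H]

theorem mul_mem_leftCoidealSpan {p x y v : H}
    (hx : Coalgebra.comul (R := R) x * ((1 : H) ⊗ₜ[R] p) = y ⊗ₜ[R] p)
    (hv : v ∈ leftCoidealSpan R p) : x * v ∈ leftCoidealSpan R p := by
  obtain ⟨μ, rfl⟩ := mem_leftCoidealSpan.mp hv
  rw [← leftSlice_one_tmul_mul, ← antipodeMulComul_comul_mul_one_tmul, hx, antipodeMulComul_tmul,
    leftSlice_tmul_one_mul]
  exact leftSlice_comul_mem_leftCoidealSpan _ p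

theorem eq_one_of_forall_mem_leftCoidealSpan_mul_eq [Module.Projective R H] {p f : H}
    (hp : Coalgebra.counit (R := R) p = 1) (hf : ∀ v ∈ leftCoidealSpan R p, v * f = v) :
    f = 1 := by
  refine comul_mul_one_tmul_injective R hp (ext_leftSlice fun μ => ?_)
  rw [leftSlice_mul_one_tmul, leftSlice_mul_one_tmul, mul_one,
    hf _ (leftSlice_comul_mem_leftCoidealSpan μ p)]

end HopfLeftCoidealSpan

section HaarIntegral

variable {R H : Type*} [CommSemiring R] [Semiring H] [Bialgebra R H]

/-- `P` is a normalized two-sided integral of the subalgebra `N` of a bialgebra: it lies in `N`,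
has `ε(P) = 1`, and `N` acts on it through `ε` from both sides. -/
structure IsHaarIntegral (N : Subalgebra R H) (P : H) : Prop where
  mem : P ∈ N
  counit_eq_one : Coalgebra.counit (R := R) P = 1
  mul_integral : ∀ x ∈ N, x * P = Coalgebra.counit (R := R) x • P
  integral_mul : ∀ x ∈ N, P * x = Coalgebra.counit (R := R) x • P

end HaarIntegral

theorem exists_isHaarIntegral {R H : Type*} [CommRing R] [Ring H] [Bialgebra R H]
    (N : Subalgebra R H) [IsSemisimpleRing N] : ∃ P, IsHaarIntegral N P := by
  obtain ⟨p, hone, hmul⟩ := exists_forall_mul_eq_smul_and_mul_eq_smul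
    ((Bialgebra.counitAlgHom R H).comp N.val)
  exact ⟨p, p.2, hone, fun x hx => congrArg Subtype.val (hmul ⟨x, hx⟩).1,
    fun x hx => congrArg Subtype.val (hmul ⟨x, hx⟩).2⟩

section LeftCoideal

variable {k}

theorem coe_leftCoidealSpan (P : A) : (leftCoidealSpan k P : Set A) = VPSet k P :=
  Set.ext fun _ => exists_congr fun _ => eq_comm

namespace IsLeftCoideal

variable {N : Submodule k A}

theorem exists_lTensor_subtype_eq_comul (hN : IsLeftCoideal k N) {x : A} (hx : x ∈ N) :
    ∃ t, N.subtype.lTensor A t = Coalgebra.comul (R := k) x :=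
  hN x hx

theorem lTensor_comul_eq_tmul (hN : IsLeftCoideal k N) {M : Type*} [AddCommMonoid M] [Module k M]
    {f : A →ₗ[k] M} {m : M} (hf : ∀ y ∈ N, f y = Coalgebra.counit (R := k) y • m) {x : A}
    (hx : x ∈ N) : f.lTensor A (Coalgebra.comul (R := k) x) = x ⊗ₜ[k] m := by
  let g : A →ₗ[k] M := LinearMap.toSpanSingleton k M m ∘ₗ Coalgebra.counit
  have hfg : f ∘ₗ N.subtype = g ∘ₗ N.subtype := LinearMap.ext fun y => hf y y.2
  obtain ⟨t, ht⟩ := hN.exists_lTensor_subtype_eq_comul hx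
  calc f.lTensor A (Coalgebra.comul (R := k) x)
      = g.lTensor A (Coalgebra.comul (R := k) x) := by
        rw [← ht, ← LinearMap.lTensor_comp_apply, hfg, LinearMap.lTensor_comp_apply]
    _ = x ⊗ₜ[k] m := by
        rw [LinearMap.lTensor_comp_apply, Coalgebra.lTensor_counit_comul, LinearMap.lTensor_tmul,
          LinearMap.toSpanSingleton_apply, one_smul]

theorem leftCoidealSpan_le (hN : IsLeftCoideal k N) {x : A} (hx : x ∈ N) :
    leftCoidealSpan k x ≤ N := by
  rintro _ ⟨μ, rfl⟩
  obtain ⟨t, ht⟩ := hN.exists_lTensor_subtype_eq_comul hx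
  rw [LinearMap.flip_apply, ← ht, leftSlice_lTensor]
  exact (leftSlice μ t).2

end IsLeftCoideal

namespace IsHaarIntegral

variable {N : Subalgebra k A} {P : A}

theorem subset_NPSet (hP : IsHaarIntegral N P) (hN : IsLeftCoidealSubalgebra k N) :
    (N : Set A) ⊆ NPSet k P := fun _ hx =>
  ⟨(one_tmul_mul P _).trans (hN.lTensor_comul_eq_tmul hP.integral_mul hx),
    (mul_one_tmul _ P).trans (hN.lTensor_comul_eq_tmul hP.mul_integral hx)⟩

theorem isRightGroupLikeProjection (hP : IsHaarIntegral N P) (hN : IsLeftCoidealSubalgebra k N) :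
    IsRightGroupLikeProjection k P := by
  have hne : P ≠ 0 := by
    rintro rfl
    simpa using hP.counit_eq_one
  have hidem : P * P = P := by rw [hP.mul_integral P hP.mem, hP.counit_eq_one, one_smul]
  obtain ⟨hleft, hright⟩ := hP.subset_NPSet hN hP.mem
  exact ⟨hne, hidem, hright, hleft⟩

theorem one_mem_leftCoidealSpan [IsSemisimpleRing N] (hP : IsHaarIntegral N P)
    (hN : IsLeftCoidealSubalgebra k N) : (1 : A) ∈ leftCoidealSpan k P := by
  let V : Ideal N :=
    { carrier := {n | (n : A) ∈ leftCoidealSpan k P}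
      add_mem' := (leftCoidealSpan k P).add_mem
      zero_mem' := (leftCoidealSpan k P).zero_mem
      smul_mem' := fun n _ => mul_mem_leftCoidealSpan (hP.subset_NPSet hN n.2).2 }
  obtain ⟨f, hfV, hf⟩ := exists_mem_ideal_forall_mul_eq V
  have hf_one : (f : A) = 1 :=
    eq_one_of_forall_mem_leftCoidealSpan_mul_eq hP.counit_eq_one fun v hv =>
      congrArg Subtype.val (hf ⟨v, hN.leftCoidealSpan_le hP.mem hv⟩ hv)
  exact hf_one ▸ hfV

theorem NPSet_subset_leftCoidealSpan [IsSemisimpleRing N] (hP : IsHaarIntegral N P)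
    (hN : IsLeftCoidealSubalgebra k N) : NPSet k P ⊆ leftCoidealSpan k P := fun x hx =>
  mul_one x ▸ mul_mem_leftCoidealSpan hx.2 (hP.one_mem_leftCoidealSpan hN)

end IsHaarIntegral

end LeftCoideal

theorem statement7_general (N : Subalgebra k A) (hN : IsLeftCoidealSubalgebra k N)
    [IsSemisimpleRing N] :
    ∃ P : A, IsRightGroupLikeProjection k P ∧ (N : Set A) = NPSet k P ∧
      NPSet k P = VPSet k P := by
  obtain ⟨P, hP⟩ := exists_isHaarIntegral N
  have hN_NP : (N : Set A) ⊆ NPSet k P := hP.subset_NPSet hN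
  have hNP_V : NPSet k P ⊆ VPSet k P :=
    coe_leftCoidealSpan (k := k) P ▸ hP.NPSet_subset_leftCoidealSpan hN
  have hV_N : VPSet k P ⊆ N := coe_leftCoidealSpan (k := k) P ▸ hN.leftCoidealSpan_le hP.mem
  exact ⟨P, hP.isRightGroupLikeProjection hN, hN_NP.antisymm (hNP_V.trans hV_N),
    hNP_V.antisymm (hV_N.trans hN_NP)⟩

/-- Theorem: a semisimple left coideal subalgebra `N ⊆ A` equals `N_P` for some right
group-like projection `P`, and moreover `N_P = V_P`. -/
theorem statement7
    (hS : Function.Bijective (HopfAlgebra.antipode (R := k) : A →ₗ[k] A))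
    (N : Subalgebra k A) (hN : IsLeftCoidealSubalgebra k N) (hss : IsSemisimpleRing N) :
    ∃ P : A, IsRightGroupLikeProjection k P ∧ (N : Set A) = NPSet k P ∧
      NPSet k P = VPSet k P :=
  statement7_general k N hN
end
end

section
/- Let A be a Hopf algebra over a field k with bijective antipode and let P ∈ A be a right group-like projection. Then V_P is a right ideal in N_P^l, a left ideal in N_P^r, a two-sided ideal in N_P, and V_P² = V_P. Moreover V_P = N_P (equivalently V_P = N_P^l, equivalently V_P = N_P^r) if and only if 1 ∈ V_P, and in that case N_P^l = N_P = N_P^r. -/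
/-!
Applying `μ ⊗ id ⊗ id` to `(Δ ⊗ id)((1 ⊗ P)Δ(P)) = Δ(P) ⊗ P` and using coassociativity gives
`V_P ⊆ N_P^l`; symmetrically `V_P ⊆ N_P^r`.

For the ideal properties, apply `a ⊗ b ↦ (S(a) ⊗ 1)Δ(b)`, which sends `Δ(x)` to `1 ⊗ x`, to
`Δ(x)(1 ⊗ P) = x ⊗ P`. For `x ∈ N_P^r` this yields `(1 ⊗ x)Δ(P) = (S(x) ⊗ 1)Δ(P)`, so
`x · (μ ⊗ id)Δ(P) = (μ(S(x) ·) ⊗ id)Δ(P)` is again in `V_P`. The map `a ⊗ b ↦ Δ(b)(S⁻¹(a) ⊗ 1)`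
gives the mirror statement for `N_P^l`.

Since `Δ(P) = Δ(P)Δ(P)` lies in `A ⊗ V_P`, slicing gives `V_P ⊆ V_P²`.
-/

open scoped TensorProduct

noncomputable section

variable (k : Type*) [Field k] {A : Type*} [Ring A] [HopfAlgebra k A]

section Slice

variable {R M N Q : Type*} [CommSemiring R] [AddCommMonoid M] [Module R M]
  [AddCommMonoid N] [Module R N] [AddCommMonoid Q] [Module R Q]

/-- The slice map `μ ⊗ id : M ⊗ N → N` along a functional `μ` on `M`, linear in `μ`. -/
def slice : Module.Dual R M →ₗ[R] M ⊗[R] N →ₗ[R] N :=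
  LinearMap.llcomp R (M ⊗[R] N) (R ⊗[R] N) N (TensorProduct.lid R N).toLinearMap ∘ₗ
    LinearMap.rTensorHom N

@[simp]
lemma slice_tmul (μ : Module.Dual R M) (m : M) (n : N) : slice μ (m ⊗ₜ[R] n) = μ m • n := by
  simp [slice]

lemma slice_lTensor (μ : Module.Dual R M) (f : N →ₗ[R] Q) (t : M ⊗[R] N) :
    slice μ (f.lTensor M t) = f (slice μ t) := by
  induction t with
  | zero => simp
  | tmul m n => simp
  | add s t hs ht => simp only [map_add, hs, ht]

lemma slice_assoc (μ : Module.Dual R M) (t : (M ⊗[R] N) ⊗[R] Q) :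
    slice μ (TensorProduct.assoc R M N Q t) = (slice μ).rTensor Q t := by
  induction t with
  | zero => simp
  | add s t hs ht => simp only [map_add, hs, ht]
  | tmul u q =>
    induction u with
    | zero => simp
    | tmul m n => simp [TensorProduct.smul_tmul']
    | add u v hu hv => simp only [TensorProduct.add_tmul, map_add, hu, hv]

/-- The right leg `{(μ ⊗ id)(t) : μ ∈ M*}` of a tensor `t ∈ M ⊗ N`. The set `V_P` is the right leg
of `Δ(P)`. -/
def rightLeg (t : M ⊗[R] N) : Submodule R N :=
  LinearMap.range (slice.flip t)

lemma slice_mem_rightLeg (μ : Module.Dual R M) (t : M ⊗[R] N) : slice μ t ∈ rightLeg t :=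
  ⟨μ, rfl⟩

lemma exists_eq_sum_tmul_mem_rightLeg [Module.Free R M] (t : M ⊗[R] N) :
    ∃ c : Module.Free.ChooseBasisIndex R M →₀ N, (∀ i, c i ∈ rightLeg t) ∧
      t = c.sum fun i n ↦ Module.Free.chooseBasis R M i ⊗ₜ[R] n := by
  classical
  let b := Module.Free.chooseBasis R M
  obtain ⟨c, rfl⟩ := TensorProduct.eq_repr_basis_left b t
  refine ⟨c, fun i ↦ ⟨b.coord i, ?_⟩, rfl⟩
  simp +contextual [Finsupp.sum, Finsupp.single_apply, ite_smul, eq_comm]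

end Slice

section SliceMul

variable {R A B : Type*} [CommSemiring R] [Semiring A] [Algebra R A] [Semiring B] [Algebra R B]

lemma slice_mul_tmul (μ : Module.Dual R A) (t : A ⊗[R] B) (a : A) (b : B) :
    slice μ (t * (a ⊗ₜ[R] b)) = slice (μ ∘ₗ LinearMap.mulRight R a) t * b := by
  induction t with
  | zero => simp
  | tmul c d => simp
  | add s t hs ht => simp only [add_mul, map_add, hs, ht]

lemma slice_tmul_mul (μ : Module.Dual R A) (a : A) (b : B) (t : A ⊗[R] B) :
    slice μ ((a ⊗ₜ[R] b) * t) = b * slice (μ ∘ₗ LinearMap.mulLeft R a) t := by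
  induction t with
  | zero => simp
  | tmul c d => simp
  | add s t hs ht => simp only [mul_add, map_add, hs, ht]

lemma rightLeg_mul_le [Module.Free R A] (s t : A ⊗[R] B) :
    rightLeg (s * t) ≤ rightLeg s * rightLeg t := by
  rintro _ ⟨μ, rfl⟩
  obtain ⟨c, hc, ht⟩ := exists_eq_sum_tmul_mem_rightLeg t
  have hst : slice μ (s * t) = ∑ i ∈ c.support,
      slice (μ ∘ₗ LinearMap.mulRight R (Module.Free.chooseBasis R A i)) s * c i := by
    conv_lhs => rw [ht]
    simp only [Finsupp.sum, Finset.mul_sum, map_sum, slice_mul_tmul]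
  rw [LinearMap.flip_apply, hst]
  exact Submodule.sum_mem _ fun i _ ↦ Submodule.mul_mem_mul (slice_mem_rightLeg _ s) (hc i)

lemma mul_mem_rightLeg_of_one_tmul_mul_eq {t : A ⊗[R] B} {a : A} {b v : B}
    (h : (1 ⊗ₜ[R] b) * t = (a ⊗ₜ[R] 1) * t) (hv : v ∈ rightLeg t) : b * v ∈ rightLeg t := by
  obtain ⟨μ, rfl⟩ := hv
  refine ⟨μ ∘ₗ LinearMap.mulLeft R a, ?_⟩
  simpa [slice_tmul_mul] using congrArg (slice μ) h.symm

lemma mul_mem_rightLeg_of_mul_one_tmul_eq {t : A ⊗[R] B} {a : A} {b v : B}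
    (h : t * (1 ⊗ₜ[R] b) = t * (a ⊗ₜ[R] 1)) (hv : v ∈ rightLeg t) : v * b ∈ rightLeg t := by
  obtain ⟨μ, rfl⟩ := hv
  refine ⟨μ ∘ₗ LinearMap.mulRight R a, ?_⟩
  simpa [slice_mul_tmul] using congrArg (slice μ) h.symm

variable {A' : Type*} [Semiring A'] [Algebra R A']

lemma rTensor_one_tmul_mul (f : A →ₗ[R] A') (b : B) (t : A ⊗[R] B) :
    f.rTensor B ((1 ⊗ₜ[R] b) * t) = (1 ⊗ₜ[R] b) * f.rTensor B t := by
  induction t with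
  | zero => simp
  | tmul c d => simp
  | add s t hs ht => simp only [mul_add, map_add, hs, ht]

lemma rTensor_mul_one_tmul (f : A →ₗ[R] A') (b : B) (t : A ⊗[R] B) :
    f.rTensor B (t * (1 ⊗ₜ[R] b)) = f.rTensor B t * (1 ⊗ₜ[R] b) := by
  induction t with
  | zero => simp
  | tmul c d => simp
  | add s t hs ht => simp only [add_mul, map_add, hs, ht]

end SliceMul

section Hopf

open Coalgebra HopfAlgebra

variable {R C B H : Type*} [CommSemiring R] [AddCommMonoid C] [Module R C] [Coalgebra R C]
  [Semiring B] [Bialgebra R B] [Semiring H] [HopfAlgebra R H]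

lemma comul_slice_comul (μ : Module.Dual R C) (x : C) :
    comul (R := R) (slice μ (comul x)) = (slice μ ∘ₗ comul).rTensor C (comul x) := by
  calc comul (slice μ (comul x))
      = slice μ (TensorProduct.assoc R C C C (comul.rTensor C (comul x))) := by
        rw [← slice_lTensor, coassoc_apply]
    _ = (slice μ ∘ₗ comul).rTensor C (comul x) := by
        rw [slice_assoc, LinearMap.rTensor_comp_apply]

/-- The map `a ⊗ b ↦ m(a ⊗ b₁) ⊗ b₂`. By coassociativity it sends `Δ(x)` to `m(Δ(x₁)) ⊗ x₂`, which
is `1 ⊗ x` as soon as `m ∘ Δ` is the unit after the counit. -/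
def contractComul {M : Type*} [AddCommMonoid M] [Module R M] (m : C ⊗[R] C →ₗ[R] M) :
    C ⊗[R] C →ₗ[R] M ⊗[R] C :=
  m.rTensor C ∘ₗ (TensorProduct.assoc R C C C).symm.toLinearMap ∘ₗ comul.lTensor C

lemma contractComul_comul {A : Type*} [Semiring A] [Algebra R A] {m : C ⊗[R] C →ₗ[R] A}
    (hm : m ∘ₗ comul = Algebra.linearMap R A ∘ₗ counit) (x : C) :
    contractComul m (comul x) = 1 ⊗ₜ[R] x := by
  calc contractComul m (comul x)
      = (m ∘ₗ comul).rTensor C (comul x) := by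
        simp only [contractComul, LinearMap.comp_apply, LinearEquiv.coe_coe, coassoc_symm_apply,
          LinearMap.rTensor_comp_apply]
    _ = 1 ⊗ₜ[R] x := by
        rw [hm, LinearMap.rTensor_comp_apply, rTensor_counit_comul]
        simp

/-- The map `a ⊗ b ↦ f(a)b`. Composed with `Δ` it is the convolution product of `f` and the
identity, so it is the unit after the counit when `f` is the antipode. -/
def twistedMul (f : B →ₗ[R] B) : B ⊗[R] B →ₗ[R] B :=
  TensorProduct.lift (LinearMap.mul R B ∘ₗ f)

/-- The map `a ⊗ b ↦ b f(a)`, that is `twistedMul f` for the opposite multiplication. Composed with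
`Δ` it is the unit after the counit when `f` is the inverse of the antipode. -/
def twistedMulOp (f : B →ₗ[R] B) : B ⊗[R] B →ₗ[R] B :=
  TensorProduct.lift ((LinearMap.mul R B).flip ∘ₗ f)

lemma contractComul_twistedMul_tmul (f : B →ₗ[R] B) (a b : B) :
    contractComul (twistedMul f) (a ⊗ₜ[R] b) = (f a ⊗ₜ[R] 1) * comul b := by
  simp only [contractComul, LinearMap.comp_apply, LinearEquiv.coe_coe, LinearMap.lTensor_tmul]
  induction comul (R := R) b with
  | zero => simp
  | tmul c d => simp [twistedMul]
  | add s t hs ht => simp only [TensorProduct.tmul_add, map_add, hs, ht, mul_add]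

lemma contractComul_twistedMulOp_tmul (f : B →ₗ[R] B) (a b : B) :
    contractComul (twistedMulOp f) (a ⊗ₜ[R] b) = comul b * (f a ⊗ₜ[R] 1) := by
  simp only [contractComul, LinearMap.comp_apply, LinearEquiv.coe_coe, LinearMap.lTensor_tmul]
  induction comul (R := R) b with
  | zero => simp
  | tmul c d => simp [twistedMulOp]
  | add s t hs ht => simp only [TensorProduct.tmul_add, map_add, hs, ht, add_mul]

lemma contractComul_twistedMul_mul (f : B →ₗ[R] B) (t : B ⊗[R] B) (p : B) :
    contractComul (twistedMul f) (t * (1 ⊗ₜ[R] p)) =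
      contractComul (twistedMul f) t * comul p := by
  induction t with
  | zero => simp
  | tmul a b => simp [contractComul_twistedMul_tmul, mul_assoc]
  | add s t hs ht => simp only [add_mul, map_add, hs, ht]

lemma contractComul_twistedMulOp_mul (f : B →ₗ[R] B) (p : B) (t : B ⊗[R] B) :
    contractComul (twistedMulOp f) ((1 ⊗ₜ[R] p) * t) =
      comul p * contractComul (twistedMulOp f) t := by
  induction t with
  | zero => simp
  | tmul a b => simp [contractComul_twistedMulOp_tmul, mul_assoc]
  | add s t hs ht => simp only [mul_add, map_add, hs, ht]

lemma one_tmul_mul_comul_eq_of_comul_mul_eq {f : B →ₗ[R] B}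
    (hf : twistedMul f ∘ₗ comul = Algebra.linearMap R B ∘ₗ counit) {p x : B}
    (hx : comul x * (1 ⊗ₜ[R] p) = x ⊗ₜ[R] p) :
    (1 ⊗ₜ[R] x) * comul p = (f x ⊗ₜ[R] 1) * comul p := by
  rw [← contractComul_comul hf, ← contractComul_twistedMul_mul, hx,
    contractComul_twistedMul_tmul]

lemma comul_mul_one_tmul_eq_of_mul_comul_eq {f : B →ₗ[R] B}
    (hf : twistedMulOp f ∘ₗ comul = Algebra.linearMap R B ∘ₗ counit) {p x : B}
    (hx : (1 ⊗ₜ[R] p) * comul x = x ⊗ₜ[R] p) :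
    comul p * (1 ⊗ₜ[R] x) = comul p * (f x ⊗ₜ[R] 1) := by
  rw [← contractComul_comul hf, ← contractComul_twistedMulOp_mul, hx,
    contractComul_twistedMulOp_tmul]

lemma twistedMul_antipode_comp_comul :
    twistedMul (antipode R) ∘ₗ comul = Algebra.linearMap R H ∘ₗ counit := by
  have h : twistedMul (antipode R) = LinearMap.mul' R H ∘ₗ (antipode R).rTensor H := by
    ext a b
    simp [twistedMul]
  rw [h, LinearMap.comp_assoc, mul_antipode_rTensor_comul]

/-- The compositional inverse `S⁻¹` of a bijective antipode; it plays the role of the antipode for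
the opposite multiplication. -/
def antipodeInv (hS : Function.Bijective (antipode R : H →ₗ[R] H)) : H →ₗ[R] H :=
  (LinearEquiv.ofBijective (antipode R) hS).symm.toLinearMap

@[simp]
lemma antipode_antipodeInv (hS : Function.Bijective (antipode R : H →ₗ[R] H)) (a : H) :
    antipode R (antipodeInv hS a) = a :=
  (LinearEquiv.ofBijective (antipode R) hS).apply_symm_apply a

lemma twistedMulOp_antipodeInv_comp_comul
    (hS : Function.Bijective (antipode R : H →ₗ[R] H)) :
    twistedMulOp (antipodeInv hS) ∘ₗ comul = Algebra.linearMap R H ∘ₗ counit := by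
  have h : antipode R ∘ₗ twistedMulOp (antipodeInv hS) =
      LinearMap.mul' R H ∘ₗ (antipode R).lTensor H := by
    ext a b
    simp [twistedMulOp, antipode_mul_antidistrib]
  ext x
  apply hS.injective
  calc antipode R (twistedMulOp (antipodeInv hS) (comul x))
      = LinearMap.mul' R H ((antipode R).lTensor H (comul x)) := LinearMap.congr_fun h _
    _ = antipode R (algebraMap R H (counit x)) := by simp [Algebra.algebraMap_eq_smul_one]

end Hopf

section GroupLikeProjection

open Coalgebra HopfAlgebra

variable {k}

lemma coe_rightLeg_comul (P : A) : (rightLeg (comul (R := k) P) : Set A) = VPSet k P :=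
  Set.ext fun _ ↦ exists_congr fun _ ↦ eq_comm

lemma VPSet_subset_NPlSet_of_mem {P x : A} (hx : x ∈ NPlSet k P) : VPSet k x ⊆ NPlSet k P := by
  rw [← coe_rightLeg_comul]
  rintro _ ⟨μ, rfl⟩
  have hx : (1 ⊗ₜ[k] P) * comul x = x ⊗ₜ[k] P := hx
  change (1 ⊗ₜ[k] P) * comul (slice μ (comul x)) = slice μ (comul x) ⊗ₜ[k] P
  rw [comul_slice_comul, ← rTensor_one_tmul_mul, hx, LinearMap.rTensor_tmul,
    LinearMap.comp_apply]

lemma VPSet_subset_NPrSet_of_mem {P x : A} (hx : x ∈ NPrSet k P) : VPSet k x ⊆ NPrSet k P := by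
  rw [← coe_rightLeg_comul]
  rintro _ ⟨μ, rfl⟩
  have hx : comul x * (1 ⊗ₜ[k] P) = x ⊗ₜ[k] P := hx
  change comul (slice μ (comul x)) * (1 ⊗ₜ[k] P) = slice μ (comul x) ⊗ₜ[k] P
  rw [comul_slice_comul, ← rTensor_mul_one_tmul, hx, LinearMap.rTensor_tmul,
    LinearMap.comp_apply]

lemma IsRightGroupLikeProjection.VPSet_subset_NPSet {P : A}
    (hP : IsRightGroupLikeProjection k P) : VPSet k P ⊆ NPSet k P :=
  Set.subset_inter (VPSet_subset_NPlSet_of_mem hP.2.2.2) (VPSet_subset_NPrSet_of_mem hP.2.2.1)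

variable (k) in
lemma one_mem_NPSet (P : A) : (1 : A) ∈ NPSet k P := by
  constructor <;> simp [NPlSet, NPrSet, Algebra.TensorProduct.one_def]

lemma mul_mem_VPSet_of_mem_NPrSet {P x v : A} (hx : x ∈ NPrSet k P) (hv : v ∈ VPSet k P) :
    x * v ∈ VPSet k P := by
  rw [← coe_rightLeg_comul] at hv ⊢
  exact mul_mem_rightLeg_of_one_tmul_mul_eq
    (one_tmul_mul_comul_eq_of_comul_mul_eq twistedMul_antipode_comp_comul hx) hv

lemma mul_mem_VPSet_of_mem_NPlSet (hS : Function.Bijective (antipode k : A →ₗ[k] A))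
    {P x v : A} (hv : v ∈ VPSet k P) (hx : x ∈ NPlSet k P) : v * x ∈ VPSet k P := by
  rw [← coe_rightLeg_comul] at hv ⊢
  exact mul_mem_rightLeg_of_mul_one_tmul_eq
    (comul_mul_one_tmul_eq_of_mul_comul_eq (twistedMulOp_antipodeInv_comp_comul hS) hx) hv

lemma IsRightGroupLikeProjection.rightLeg_comul_mul_self {P : A}
    (hP : IsRightGroupLikeProjection k P) :
    rightLeg (comul (R := k) P) * rightLeg (comul P) = rightLeg (comul P) := by
  apply le_antisymm
  · refine Submodule.mul_le.2 fun v hv w hw ↦ ?_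
    rw [← SetLike.mem_coe, coe_rightLeg_comul] at hv hw ⊢
    exact mul_mem_VPSet_of_mem_NPrSet (hP.VPSet_subset_NPSet hv).2 hw
  · have hidem : comul (R := k) P * comul P = comul P := by rw [← Bialgebra.comul_mul, hP.2.1]
    simpa only [hidem] using rightLeg_mul_le (comul (R := k) P) (comul P)

lemma IsRightGroupLikeProjection.span_mul_VPSet {P : A} (hP : IsRightGroupLikeProjection k P) :
    Submodule.span k {z : A | ∃ v ∈ VPSet k P, ∃ w ∈ VPSet k P, z = v * w} =
      Submodule.span k (VPSet k P) := by
  have hset : {z : A | ∃ v ∈ VPSet k P, ∃ w ∈ VPSet k P, z = v * w} =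
      Set.image2 (· * ·) (VPSet k P) (VPSet k P) := by
    ext z
    simp only [Set.mem_ofPred_eq, Set.mem_image2, eq_comm]
  rw [hset, Set.image2_mul, ← coe_rightLeg_comul, ← Submodule.mul_eq_span_mul_set,
    hP.rightLeg_comul_mul_self, Submodule.span_eq]

end GroupLikeProjection

/-- Theorem: `V_P` is a right ideal in `N_P^l`, a left ideal in `N_P^r`, a two-sided
ideal in `N_P`, and `V_P² = V_P`. Moreover `V_P = N_P` (equivalently `V_P = N_P^l`,
equivalently `V_P = N_P^r`) iff `1 ∈ V_P`, in which case `N_P^l = N_P = N_P^r`. -/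
theorem statement10
    (hS : Function.Bijective (HopfAlgebra.antipode (R := k) : A →ₗ[k] A))
    (P : A) (hP : IsRightGroupLikeProjection k P) :
    (∀ v ∈ VPSet k P, ∀ x ∈ NPlSet k P, v * x ∈ VPSet k P) ∧
    (∀ x ∈ NPrSet k P, ∀ v ∈ VPSet k P, x * v ∈ VPSet k P) ∧
    (∀ x ∈ NPSet k P, ∀ v ∈ VPSet k P, x * v ∈ VPSet k P ∧ v * x ∈ VPSet k P) ∧
    (Submodule.span k {z : A | ∃ v ∈ VPSet k P, ∃ w ∈ VPSet k P, z = v * w} =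
      Submodule.span k (VPSet k P)) ∧
    (VPSet k P = NPSet k P ↔ (1 : A) ∈ VPSet k P) ∧
    (VPSet k P = NPlSet k P ↔ (1 : A) ∈ VPSet k P) ∧
    (VPSet k P = NPrSet k P ↔ (1 : A) ∈ VPSet k P) ∧
    ((1 : A) ∈ VPSet k P → NPlSet k P = NPSet k P ∧ NPrSet k P = NPSet k P) := by
  have hVN := hP.VPSet_subset_NPSet
  have hVl : VPSet k P ⊆ NPlSet k P := hVN.trans Set.inter_subset_left
  have hVr : VPSet k P ⊆ NPrSet k P := hVN.trans Set.inter_subset_right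
  have h1 := one_mem_NPSet k P
  have hl : (1 : A) ∈ VPSet k P → NPlSet k P ⊆ VPSet k P := fun h x hx ↦ by
    simpa only [one_mul] using mul_mem_VPSet_of_mem_NPlSet hS h hx
  have hr : (1 : A) ∈ VPSet k P → NPrSet k P ⊆ VPSet k P := fun h x hx ↦ by
    simpa only [mul_one] using mul_mem_VPSet_of_mem_NPrSet hx h
  exact ⟨fun v hv x hx ↦ mul_mem_VPSet_of_mem_NPlSet hS hv hx,
    fun x hx v hv ↦ mul_mem_VPSet_of_mem_NPrSet hx hv,
    fun x hx v hv ↦ ⟨mul_mem_VPSet_of_mem_NPrSet hx.2 hv, mul_mem_VPSet_of_mem_NPlSet hS hv hx.1⟩,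
    hP.span_mul_VPSet,
    ⟨fun h ↦ h ▸ h1, fun h ↦ hVN.antisymm (Set.inter_subset_left.trans (hl h))⟩,
    ⟨fun h ↦ h ▸ h1.1, fun h ↦ hVl.antisymm (hl h)⟩,
    ⟨fun h ↦ h ▸ h1.2, fun h ↦ hVr.antisymm (hr h)⟩,
    fun h ↦ ⟨((hl h).trans hVN).antisymm Set.inter_subset_left,
      ((hr h).trans hVN).antisymm Set.inter_subset_right⟩⟩
end
end
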